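/- Let M : (Fin n → Bool) → (Fin n → Bool), and for each i : Fin n and each state X define σ_i(X) : Fin n → Bool by σ_i(X) j = M(X) j if j < i and σ_i(X) j = X j otherwise. Suppose M admits a sequentialization in the identity schedule, i.e., there is a family (F_i)_{i : Fin n} of coordinate-update maps (not necessarily monotone) with F_{n-1} ∘ ⋯ ∘ F_1 ∘ F_0 = M. Then there exists a family (G_i)_{i : Fin n} of MONOTONE coordinate-update maps with G_{n-1} ∘ ⋯ ∘ G_1 ∘ G_0 = M if and only if for every i and all states X, Y: σ_i(X) ≤ σ_i(Y) implies M(X) i ≤ M(Y) i (equivalently, each F_i is monotone on the set A_i of intermediate states reached just before updating vertex i, which equals the range of σ_i). -/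

import Mathlib

/-- The SDS map for the identity schedule: `F_{n-1} ∘ ⋯ ∘ F_1 ∘ F_0` (vertex 0 updated first). -/
def seqCompId {n : ℕ} (F : Fin n → (Fin n → Bool) → (Fin n → Bool))
    (X : Fin n → Bool) : Fin n → Bool :=
  (List.finRange n).foldl (fun Y i => F i Y) X

/-- The intermediate state just before vertex `i` is updated under the parallel map `M`
with identity schedule: coordinates `j < i` already hold their new value `M X j`. -/
def sigma' {n : ℕ} (M : (Fin n → Bool) → (Fin n → Bool)) (i : Fin n)
    (X : Fin n → Bool) : Fin n → Bool :=
  fun j => if j < i then M X j else X j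

/-!
Vertex `i` is updated from the state in which the coordinates below `i` are already final and the
others are untouched, so the local maps `F i` compose to `M` exactly when `F i` sends that
intermediate state of every `X` to `M X i` at `i`. The local maps can therefore be chosen
independently of one another, and a monotone choice at `i` amounts to extending a prescribed partial
map to a monotone one, which the supremum over all smaller intermediate states does.
-/

theorem exists_monotone_comp_eq_iff {ι P L : Type*} [Preorder P] [CompleteLattice L]
    {s : ι → P} {f : ι → L} :
    (∃ g : P → L, Monotone g ∧ ∀ x, g (s x) = f x) ↔ ∀ x y, s x ≤ s y → f x ≤ f y := by
  constructor
  · rintro ⟨g, hg, hgf⟩ x y hxy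
    simpa only [hgf] using hg hxy
  · intro hf
    refine ⟨fun z => ⨆ (x) (_ : s x ≤ z), f x, fun z w hzw => ?_, fun y => le_antisymm ?_ ?_⟩
    · exact iSup_mono fun x => iSup_mono' fun hx => ⟨hx.trans hzw, le_rfl⟩
    · exact iSup₂_le fun x hx => hf x y hx
    · exact le_iSup₂_of_le y le_rfl le_rfl

theorem exists_finRange_eq_append_cons {n : ℕ} (i : Fin n) :
    ∃ l₁ l₂, List.finRange n = l₁ ++ i :: l₂ ∧ (∀ j ∈ l₁, j < i) ∧ ∀ j ∈ l₂, i < j := by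
  obtain ⟨l₁, l₂, hl⟩ := List.append_of_mem (List.mem_finRange i)
  have hsorted : (l₁ ++ i :: l₂).Pairwise (· < ·) := hl ▸ List.pairwise_lt_finRange n
  rw [List.pairwise_append, List.pairwise_cons] at hsorted
  exact ⟨l₁, l₂, hl, fun j hj => hsorted.2.2 j hj i List.mem_cons_self, hsorted.2.1.1⟩

/-- `f` is a coordinate-update map at `i`: it leaves every coordinate other than `i` unchanged. -/
def IsCoordUpdate {ι : Type*} {α : ι → Type*} (i : ι) (f : (∀ j, α j) → ∀ j, α j) : Prop :=
  ∀ X j, j ≠ i → f X j = X j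

section CoordUpdate

variable {ι : Type*} {α : ι → Type*}

theorem isCoordUpdate_update [DecidableEq ι] (i : ι) (g : (∀ j, α j) → α i) :
    IsCoordUpdate i fun X => Function.update X i (g X) :=
  fun X _ hj => Function.update_of_ne hj (g X) X

theorem monotone_update [DecidableEq ι] [∀ i, Preorder (α i)] {i : ι} {g : (∀ j, α j) → α i}
    (hg : Monotone g) : Monotone fun X => Function.update X i (g X) :=
  fun _ _ hXY => update_le_update_iff.2 ⟨hg hXY, fun j _ => hXY j⟩

theorem foldl_apply_of_notMem {F : ι → (∀ j, α j) → ∀ j, α j}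
    (hF : ∀ i, IsCoordUpdate i (F i)) {j : ι} {l : List ι} (hj : j ∉ l) (X : ∀ j, α j) :
    l.foldl (fun Y i => F i Y) X j = X j := by
  induction l generalizing X with
  | nil => rfl
  | cons i l ih =>
    obtain ⟨hji, hjl⟩ := List.ne_and_not_mem_of_not_mem_cons hj
    rw [List.foldl_cons, ih hjl, hF i X j hji]

end CoordUpdate

section Sequentialization

variable {n : ℕ} {α : Fin n → Type*}

/-- The composition `F (n-1) ∘ ⋯ ∘ F 0`, with coordinate `j` of a state ranging over `α j`; it is
`seqCompId` for states that need not be Boolean. -/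
def seqComp (F : Fin n → (∀ j, α j) → ∀ j, α j) (X : ∀ j, α j) : ∀ j, α j :=
  (List.finRange n).foldl (fun Y i => F i Y) X

/-- The state reached from `X` just before vertex `i` is updated, when the completed sequence of
updates has the effect of `M`; it is `sigma'` for states that need not be Boolean. -/
def intermediateState (M : (∀ j, α j) → ∀ j, α j) (i : Fin n) (X : ∀ j, α j) : ∀ j, α j :=
  fun j => if j < i then M X j else X j

theorem intermediateState_congr {M N : (∀ j, α j) → ∀ j, α j} {i : Fin n} {X : ∀ j, α j}
    (h : ∀ j < i, M X j = N X j) : intermediateState M i X = intermediateState N i X :=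
  funext fun j => ite_congr rfl (h j) fun _ => rfl

theorem seqComp_apply {F : Fin n → (∀ j, α j) → ∀ j, α j} (hF : ∀ i, IsCoordUpdate i (F i))
    (X : ∀ j, α j) (i : Fin n) :
    seqComp F X i = F i (intermediateState (seqComp F) i X) i := by
  obtain ⟨l₁, l₂, hl, hlt, hgt⟩ := exists_finRange_eq_append_cons i
  set Y := l₁.foldl (fun Y i => F i Y) X with hY
  have hcomp : seqComp F X = l₂.foldl (fun Y i => F i Y) (F i Y) := by
    rw [seqComp, hl, List.foldl_append, List.foldl_cons]
  have hstate : intermediateState (seqComp F) i X = Y := by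
    funext j
    by_cases hj : j < i
    · have hj₂ : j ∉ l₂ := fun h => hj.asymm (hgt j h)
      rw [intermediateState, if_pos hj, hcomp, foldl_apply_of_notMem hF hj₂, hF i Y j hj.ne]
    · have hj₁ : j ∉ l₁ := fun h => hj (hlt j h)
      rw [intermediateState, if_neg hj, hY, foldl_apply_of_notMem hF hj₁]
  rw [hstate, hcomp, foldl_apply_of_notMem hF fun h => (hgt i h).false]

theorem seqComp_eq_iff {F : Fin n → (∀ j, α j) → ∀ j, α j} (hF : ∀ i, IsCoordUpdate i (F i))
    {M : (∀ j, α j) → ∀ j, α j} :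
    seqComp F = M ↔ ∀ i X, F i (intermediateState M i X) i = M X i := by
  constructor
  · rintro rfl i X
    exact (seqComp_apply hF X i).symm
  · intro hM
    funext X i
    induction i using WellFoundedLT.induction with
    | ind i ih => rw [seqComp_apply hF, intermediateState_congr ih, hM]

theorem stmt_19_general [∀ i, CompleteLattice (α i)] (M : (∀ j, α j) → ∀ j, α j) :
    (∃ G : Fin n → (∀ j, α j) → ∀ j, α j,
      (∀ i, IsCoordUpdate i (G i)) ∧ (∀ i, Monotone (G i)) ∧ seqComp G = M) ↔
    ∀ i X Y, intermediateState M i X ≤ intermediateState M i Y → M X i ≤ M Y i := by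
  simp only [← exists_monotone_comp_eq_iff]
  constructor
  · rintro ⟨G, hupd, hmono, hG⟩ i
    exact ⟨fun X => G i X i, fun _ _ hXY => hmono i hXY i, (seqComp_eq_iff hupd).1 hG i⟩
  · intro h
    choose g hmono hg using h
    have hupd := fun i => isCoordUpdate_update i (g i)
    refine ⟨_, hupd, fun i => monotone_update (hmono i), (seqComp_eq_iff hupd).2 fun i X => ?_⟩
    rw [Function.update_self, hg]

end Sequentialization

theorem stmt_19 {n : ℕ} (M : (Fin n → Bool) → (Fin n → Bool))
    (F : Fin n → (Fin n → Bool) → (Fin n → Bool))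
    (hupd : ∀ (i : Fin n) (X : Fin n → Bool) (j : Fin n), j ≠ i → F i X j = X j)
    (hseq : seqCompId F = M) :
    (∃ G : Fin n → (Fin n → Bool) → (Fin n → Bool),
      (∀ (i : Fin n) (X : Fin n → Bool) (j : Fin n), j ≠ i → G i X j = X j) ∧
      (∀ i : Fin n, Monotone (G i)) ∧ seqCompId G = M) ↔
    (∀ (i : Fin n) (X Y : Fin n → Bool),
      sigma' M i X ≤ sigma' M i Y → M X i ≤ M Y i) :=
  stmt_19_general M
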